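/- ∫₀^{π/2} ∫₀^{π/2} sin²φ · √(1 − cos²θ · sin²φ) dφ dθ = (π²/8) · Σ_{k=0}^{∞} [ (−1/2)_k · (1/2)_k · (3/2)_k ] / [ (1)_k · (2)_k · k! ], where (a)_k = a(a+1)⋯(a+k−1) is the Pochhammer symbol. (The right side is (π²/8) · ₃F₂(−1/2, 1/2, 3/2; 1, 2; 1); this identity underlies the second moment of the mean width of a random planar shadow of the 3-cube.) -/

import Mathlib

open Real

/-!
Expand `(1 - x) ^ s = ∑ (-s)_k / k! * x ^ k` at `x = cos² θ sin² φ`. For `0 ≤ s` the coefficients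
are absolutely summable, so the series may be integrated over the square term by term although `x`
comes arbitrarily close to `1`. In each term the variables separate, and Wallis' formula
`∫ cos ^ (2k) = ∫ sin ^ (2k) = π / 2 * (1/2)_k / k!` over `[0, π / 2]` evaluates both factors.
In the code `(a)_k / k!` is `Ring.multichoose a k`.
-/

open MeasureTheory Set

lemma eval_ascPochhammer_add {R : Type*} [CommSemiring R] (a : R) (n k : ℕ) :
    (ascPochhammer R (n + k)).eval a =
      (ascPochhammer R n).eval a * (ascPochhammer R k).eval (a + n) := by
  simp [← ascPochhammer_mul, Polynomial.eval_comp]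

section Field

variable {K : Type*} [Field K] [CharZero K] [BinomialRing K]

lemma multichoose_eq_eval_ascPochhammer_div_factorial (a : K) (n : ℕ) :
    Ring.multichoose a n = (ascPochhammer K n).eval a / n.factorial := by
  rw [eq_div_iff (by exact_mod_cast n.factorial_ne_zero), mul_comm, ← nsmul_eq_mul,
    Ring.factorial_nsmul_multichoose_eq_ascPochhammer, Polynomial.ascPochhammer_smeval_eq_eval]

lemma multichoose_add_right (a : K) (n k : ℕ) :
    Ring.multichoose a (n + k) =
      Ring.multichoose a n *
        ((ascPochhammer K k).eval (a + n) / (ascPochhammer K k).eval (1 + n : K)) := by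
  simp only [multichoose_eq_eval_ascPochhammer_div_factorial, ← ascPochhammer_eval_one,
    eval_ascPochhammer_add, mul_div_mul_comm]

end Field

lemma sum_range_succ_multichoose {R : Type*} [Semiring R] [BinomialRing R] (a : R) (n : ℕ) :
    ∑ k ∈ Finset.range (n + 1), Ring.multichoose a k = Ring.multichoose (a + 1) n := by
  induction n with
  | zero => simp
  | succ n ih => rw [Finset.sum_range_succ, ih, Ring.multichoose_succ_succ, add_comm]

lemma eval_ascPochhammer_nonneg {a : ℝ} (ha : 0 ≤ a) (n : ℕ) :
    0 ≤ (ascPochhammer ℝ n).eval a := by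
  rcases ha.eq_or_lt with rfl | ha
  · rw [ascPochhammer_eval_zero]
    positivity
  · exact (ascPochhammer_pos n a ha).le

lemma multichoose_nonneg {a : ℝ} (ha : 0 ≤ a) (n : ℕ) : 0 ≤ Ring.multichoose a n := by
  rw [multichoose_eq_eval_ascPochhammer_div_factorial]
  exact div_nonneg (eval_ascPochhammer_nonneg ha n) n.factorial.cast_nonneg

lemma multichoose_succ_nonpos {a : ℝ} (ha : a ∈ Icc (-1) 0) (n : ℕ) :
    Ring.multichoose a (n + 1) ≤ 0 := by
  rw [add_comm, multichoose_add_right, Ring.multichoose_one_right, Nat.cast_one,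
    one_add_one_eq_two]
  exact mul_nonpos_of_nonpos_of_nonneg ha.2 <|
    div_nonneg (eval_ascPochhammer_nonneg (neg_le_iff_add_nonneg.mp ha.1) n)
      (eval_ascPochhammer_nonneg zero_le_two n)

/- All coefficients after the first, which is `1`, are nonpositive, and the partial sums are the
nonnegative numbers `multichoose (a + 1) n`, so the later absolute values add up to at most `1`. -/
lemma summable_abs_multichoose_of_mem_Icc {a : ℝ} (ha : a ∈ Icc (-1) 0) :
    Summable fun k => |Ring.multichoose a k| := by
  rw [← summable_nat_add_iff 1]
  refine summable_of_sum_range_le (c := 1) (fun _ => abs_nonneg _) fun n => ?_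
  have partial_sum : ∑ k ∈ Finset.range n, Ring.multichoose a (k + 1) + 1 =
      Ring.multichoose (a + 1) n := by
    rw [← sum_range_succ_multichoose, Finset.sum_range_succ', Ring.multichoose_zero_right]
  have partial_sum_nonneg := multichoose_nonneg (neg_le_iff_add_nonneg.mp ha.1) n
  simp only [abs_of_nonpos (multichoose_succ_nonpos ha _), Finset.sum_neg_distrib]
  linarith

lemma summable_abs_multichoose_of_add_one {a : ℝ}
    (h : Summable fun k => |Ring.multichoose (a + 1) k|) :
    Summable fun k => |Ring.multichoose a k| := by
  have pascal (k : ℕ) : Ring.multichoose a (k + 1) =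
      Ring.multichoose (a + 1) (k + 1) - Ring.multichoose (a + 1) k := by
    rw [Ring.multichoose_succ_succ, add_sub_cancel_right]
  rw [← summable_nat_add_iff 1]
  simp only [pascal]
  exact (((summable_nat_add_iff 1).mpr h.of_abs).sub h.of_abs).abs

lemma summable_abs_multichoose {a : ℝ} (ha : a ≤ 0) :
    Summable fun k => |Ring.multichoose a k| := by
  obtain ⟨n, hn⟩ := exists_nat_ge (-a)
  induction n generalizing a with
  | zero => exact summable_abs_multichoose_of_mem_Icc ⟨by push_cast at hn; linarith, ha⟩
  | succ n ih =>
    rcases le_total (-1) a with h | h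
    · exact summable_abs_multichoose_of_mem_Icc ⟨h, ha⟩
    · exact summable_abs_multichoose_of_add_one
        (ih (by linarith) (by push_cast at hn; linarith))

lemma hasSum_multichoose_mul_pow (a : ℝ) {x : ℝ} (hx : |x| < 1) :
    HasSum (fun k => Ring.multichoose a k * x ^ k) ((1 - x) ^ (-a)) := by
  have hx_mem : x ∈ Metric.eball (0 : ℝ) 1 := by
    simpa [enorm_eq_nnnorm, ← NNReal.coe_lt_coe] using hx
  have h := (one_div_one_sub_rpow_hasFPowerSeriesOnBall_zero a).hasSum hx_mem
  rw [zero_add, one_div, ← rpow_neg (by linarith [le_abs_self x])] at h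
  simpa [FormalMultilinearSeries.ofScalars, Ring.multichoose_eq] using h

lemma integral_cos_pow_two_mul (n : ℕ) :
    ∫ x in (0 : ℝ)..(π / 2), cos x ^ (2 * n) = π / 2 * Ring.multichoose (1 / 2 : ℝ) n := by
  have prod_eq : ∏ i ∈ Finset.range n, (2 * (i : ℝ) + 1) / (2 * i + 2) =
      Ring.multichoose (1 / 2 : ℝ) n := by
    induction n with
    | zero => simp
    | succ n ih =>
      rw [Finset.prod_range_succ, ih, multichoose_add_right]
      simp only [ascPochhammer_one, Polynomial.eval_X]
      field_simp
      ring
  rw [EulerSine.integral_cos_pow_eq, integral_sin_pow_even, prod_eq]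
  ring

lemma integral_sin_pow_two_mul (n : ℕ) :
    ∫ x in (0 : ℝ)..(π / 2), sin x ^ (2 * n) = π / 2 * Ring.multichoose (1 / 2 : ℝ) n := by
  simpa [cos_pi_div_two_sub, integral_cos_pow_two_mul] using
    intervalIntegral.integral_comp_sub_left (a := 0) (b := π / 2) (fun x => cos x ^ (2 * n)) (π / 2)

lemma hasSum_integral_mul_of_hasSum_pow {X 𝕜 : Type*} [MeasurableSpace X] {μ : Measure X}
    [RCLike 𝕜] {c : ℕ → 𝕜} {f : 𝕜 → 𝕜} {w u : X → 𝕜} (hc : Summable fun k => ‖c k‖)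
    (hf : ∀ x, ‖x‖ < 1 → HasSum (fun k => c k * x ^ k) (f x)) (hw : Integrable w μ)
    (hu : AEStronglyMeasurable u μ) (hu_lt : ∀ᵐ x ∂μ, ‖u x‖ < 1) :
    HasSum (fun k => c k * ∫ x, w x * u x ^ k ∂μ) (∫ x, w x * f (u x) ∂μ) := by
  simp only [← integral_const_mul]
  refine hasSum_integral_of_dominated_convergence (fun k x => ‖c k‖ * ‖w x‖)
    (fun k => ?_) (fun k => ?_) ?_ ?_ ?_
  · exact (hw.aestronglyMeasurable.mul (hu.pow k)).const_mul (c k)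
  · filter_upwards [hu_lt] with x hx
    rw [norm_mul, norm_mul, norm_pow]
    gcongr
    exact mul_le_of_le_one_right (norm_nonneg _) (pow_le_one₀ (norm_nonneg _) hx.le)
  · exact .of_forall fun x => hc.mul_right _
  · simpa only [tsum_mul_right] using hw.norm.const_mul _
  · filter_upwards [hu_lt] with x hx
    simpa only [mul_left_comm] using (hf (u x) hx).mul_left (w x)

section Rectangle

variable {E : Type*} [NormedAddCommGroup E] {f : ℝ × ℝ → E}

lemma integrableOn_Ioc_prod_Ioc_of_continuous (hf : Continuous f) (a b c d : ℝ) :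
    IntegrableOn f (Ioc a b ×ˢ Ioc c d) := by
  have hf_Icc : IntegrableOn f (Icc (a, c) (b, d)) := hf.integrableOn_Icc
  rw [← Icc_prod_Icc] at hf_Icc
  exact hf_Icc.mono_set (prod_mono Ioc_subset_Icc_self Ioc_subset_Icc_self)

lemma intervalIntegral_intervalIntegral_eq_setIntegral_prod [NormedSpace ℝ E] (hf : Continuous f)
    {a b c d : ℝ} (hab : a ≤ b) (hcd : c ≤ d) :
    ∫ x in a..b, ∫ y in c..d, f (x, y) = ∫ z in Ioc a b ×ˢ Ioc c d, f z := by
  simp only [intervalIntegral.integral_of_le hab, intervalIntegral.integral_of_le hcd]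
  exact (setIntegral_prod f (integrableOn_Ioc_prod_Ioc_of_continuous hf a b c d)).symm

end Rectangle

lemma abs_cos_sq_mul_sin_sq_lt_one {θ : ℝ} (hθ : θ ∈ Ioo 0 π) (φ : ℝ) :
    |cos θ ^ 2 * sin φ ^ 2| < 1 := by
  have cos_sq_lt_one : cos θ ^ 2 < 1 := by
    nlinarith [sin_sq_add_cos_sq θ, sin_pos_of_mem_Ioo hθ]
  rw [abs_of_nonneg (by positivity)]
  exact (mul_le_of_le_one_right (sq_nonneg _) (sin_sq_le_one φ)).trans_lt cos_sq_lt_one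

lemma setIntegral_cos_pow_mul_sin_pow (m n : ℕ) :
    ∫ z in Ioc 0 (π / 2) ×ˢ Ioc 0 (π / 2), cos z.1 ^ (2 * m) * sin z.2 ^ (2 * n) =
      π ^ 2 / 4 * (Ring.multichoose (1 / 2 : ℝ) m * Ring.multichoose (1 / 2 : ℝ) n) := by
  have h := setIntegral_prod_mul (μ := volume) (ν := volume) (fun θ => cos θ ^ (2 * m))
    (fun φ => sin φ ^ (2 * n)) (Ioc 0 (π / 2)) (Ioc 0 (π / 2))
  rw [← intervalIntegral.integral_of_le pi_div_two_pos.le,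
    ← intervalIntegral.integral_of_le pi_div_two_pos.le,
    integral_cos_pow_two_mul, integral_sin_pow_two_mul] at h
  rw [Measure.volume_eq_prod, h]
  ring

lemma hasSum_integral_cos_pow_mul_sin_pow_mul_rpow {s : ℝ} (hs : 0 ≤ s) (m n : ℕ) :
    HasSum (fun k => Ring.multichoose (-s) k *
        (π ^ 2 / 4 * (Ring.multichoose (1 / 2 : ℝ) (m + k) * Ring.multichoose (1 / 2 : ℝ) (n + k))))
      (∫ θ in (0 : ℝ)..(π / 2), ∫ φ in (0 : ℝ)..(π / 2),
        cos θ ^ (2 * m) * sin φ ^ (2 * n) * (1 - cos θ ^ 2 * sin φ ^ 2) ^ s) := by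
  let w (z : ℝ × ℝ) : ℝ := cos z.1 ^ (2 * m) * sin z.2 ^ (2 * n)
  let u (z : ℝ × ℝ) : ℝ := cos z.1 ^ 2 * sin z.2 ^ 2
  let Q : Set (ℝ × ℝ) := Ioc 0 (π / 2) ×ˢ Ioc 0 (π / 2)
  have moment (k : ℕ) : ∫ z in Q, w z * u z ^ k = π ^ 2 / 4 *
      (Ring.multichoose (1 / 2 : ℝ) (m + k) * Ring.multichoose (1 / 2 : ℝ) (n + k)) := by
    rw [← setIntegral_cos_pow_mul_sin_pow]
    congr 1 with z
    ring
  have hw : IntegrableOn w Q := integrableOn_Ioc_prod_Ioc_of_continuous (by fun_prop) ..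
  have hu : Continuous u := by fun_prop
  have hu_lt : ∀ᵐ z ∂volume.restrict Q, |u z| < 1 := by
    filter_upwards [ae_restrict_mem (measurableSet_Ioc.prod measurableSet_Ioc)] with z hz
    exact abs_cos_sq_mul_sin_sq_lt_one ⟨hz.1.1, hz.1.2.trans_lt (by linarith [pi_pos])⟩ z.2
  have hF : Continuous fun z => w z * (1 - u z) ^ s := by fun_prop (disch := exact hs)
  rw [intervalIntegral_intervalIntegral_eq_setIntegral_prod hF
    pi_div_two_pos.le pi_div_two_pos.le]
  simp only [← moment]
  exact hasSum_integral_mul_of_hasSum_pow (f := fun x => (1 - x) ^ s)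
    (summable_abs_multichoose (neg_nonpos.mpr hs))
    (fun x hx => by simpa using hasSum_multichoose_mul_pow (-s) hx) hw
    hu.aestronglyMeasurable hu_lt

theorem double_integral_eq_3F2_general {s : ℝ} (hs : 0 ≤ s) (m n : ℕ) :
    (∫ θ in (0 : ℝ)..(π / 2), ∫ φ in (0 : ℝ)..(π / 2),
        cos θ ^ (2 * m) * sin φ ^ (2 * n) * (1 - cos θ ^ 2 * sin φ ^ 2) ^ s) =
      π ^ 2 / 4 * (Ring.multichoose (1 / 2 : ℝ) m * Ring.multichoose (1 / 2 : ℝ) n) *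
        ∑' k : ℕ,
          ((ascPochhammer ℝ k).eval (-s) * (ascPochhammer ℝ k).eval (1 / 2 + m : ℝ) *
            (ascPochhammer ℝ k).eval (1 / 2 + n : ℝ)) /
          ((ascPochhammer ℝ k).eval (1 + m : ℝ) * (ascPochhammer ℝ k).eval (1 + n : ℝ) *
            (k.factorial : ℝ)) := by
  rw [← (hasSum_integral_cos_pow_mul_sin_pow_mul_rpow hs m n).tsum_eq, ← tsum_mul_left]
  congr 1 with k
  simp only [multichoose_add_right, multichoose_eq_eval_ascPochhammer_div_factorial (-s)]
  ring

/-- `∫₀^{π/2}∫₀^{π/2} sin²φ √(1 − cos²θ sin²φ) dφ dθ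
  = (π²/8) · ₃F₂(−1/2, 1/2, 3/2; 1, 2; 1)`, the hypergeometric value being written
as an absolutely convergent series in Pochhammer symbols. -/
theorem double_integral_eq_3F2 :
    (∫ θ in (0:ℝ)..(π/2), ∫ φ in (0:ℝ)..(π/2),
        Real.sin φ ^ 2 * Real.sqrt (1 - Real.cos θ ^ 2 * Real.sin φ ^ 2))
    = (π ^ 2 / 8) *
      ∑' k : ℕ,
        ((ascPochhammer ℝ k).eval (-1/2) * (ascPochhammer ℝ k).eval (1/2) *
          (ascPochhammer ℝ k).eval (3/2)) /
        ((ascPochhammer ℝ k).eval 1 * (ascPochhammer ℝ k).eval 2 * (k.factorial : ℝ)) := by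
  have prefactor : π ^ 2 / 8 =
      π ^ 2 / 4 * (Ring.multichoose (1 / 2 : ℝ) 0 * Ring.multichoose (1 / 2 : ℝ) 1) := by
    rw [Ring.multichoose_zero_right, Ring.multichoose_one_right]
    ring
  rw [prefactor]
  convert double_integral_eq_3F2_general (s := 1 / 2) (by norm_num) 0 1 using 1
  · simp [sqrt_eq_rpow]
  · norm_num
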